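/- For every integer α with 6 ≤ α ≤ 10 and every nonnegative integer N, the equation x² + 2y² + αz² + 3(3t² − 2t) = N has an integer solution in ℤ⁴; and for every integer β with 4 ≤ β ≤ 10 and every nonnegative integer N, the equation x² + 2y² + 3(3z² − 2z) + β(3t² − 2t) = N has an integer solution in ℤ⁴. That is, the quaternary mixed sums x²+2y²+αz²+3P₈(t) (6 ≤ α ≤ 10) and x²+2y²+3P₈(z)+βP₈(t) (4 ≤ β ≤ 10) are universal. -/

import Mathlib

/-!
Since `3 P₈(t) + 1 = (3t - 1)²`, and every square prime to `3` has this form, `N` is represented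
by `x² + 2y² + 3 P₈(t) + f(z)` exactly when `N + 1 = x² + 2y² + w² + f(z)` with `3 ∤ w`. The
three-squares theorem, obtained from Dirichlet's theorem on primes and the fact that a positive
ternary form of determinant one is equivalent to a sum of three squares, describes the values `m` of
`x² + 2y² + w²`. The condition `3 ∤ w` can be added when `0 < m` and `m ≢ 2 (mod 3)`, because a
nonzero value of `w² + 2y²` divisible by `9` is also taken with `3 ∤ w`. Doubling `x`, `y`, `w`
while replacing `z` by `2z` in `αz²`, or by `1 - 2z` in `β P₈(z)`, leads from `n` to `4n` or to
`4n + β`; for the remaining `n`, a few small values of `z` suffice. When `3` divides the coefficient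
of `f` and `n ≡ 2 (mod 3)`, no choice of `z` changes the residue modulo `3`, and `n` is represented
through other ternary forms, such as `x² + 2y² + 6z²` and `x² + 2y² + 3s²`, which are again
governed by sums of three squares.
-/

open scoped NumberTheorySymbols

/-! ### Positive unimodular ternary forms -/

/-- An integral ternary quadratic form, recorded by the entries of its symmetric matrix
`!![a, t, s; t, b, r; s, r, c]`. -/
structure TernaryForm where
  a : ℤ
  b : ℤ
  c : ℤ
  r : ℤ
  s : ℤ
  t : ℤ

namespace TernaryForm

/-- The leading `2 × 2` principal minor. -/
def minor₁₂ (F : TernaryForm) : ℤ := F.a * F.b - F.t ^ 2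

/-- The principal minor on the first and third basis vectors. -/
def minor₁₃ (F : TernaryForm) : ℤ := F.a * F.c - F.s ^ 2

/-- The minor on rows `1, 2` and columns `1, 3`. -/
def mixedMinor (F : TernaryForm) : ℤ := F.a * F.r - F.s * F.t

/-- The determinant of the matrix of the form. -/
def det (F : TernaryForm) : ℤ :=
  F.a * F.b * F.c + 2 * F.r * F.s * F.t - F.a * F.r ^ 2 - F.b * F.s ^ 2 - F.c * F.t ^ 2

/-- Positive definite forms of determinant one, with definiteness expressed by Sylvester's
criterion on leading minors. -/
structure IsPosUnimodular (F : TernaryForm) : Prop where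
  a_pos : 0 < F.a
  minor_pos : 0 < F.minor₁₂
  det_eq_one : F.det = 1

/-- The matrix of the form is the Gram matrix of three vectors of the lattice `ℤ³`. -/
def IsGram (F : TernaryForm) : Prop :=
  ∃ u v w : Fin 3 → ℤ, u ⬝ᵥ u = F.a ∧ v ⬝ᵥ v = F.b ∧ w ⬝ᵥ w = F.c ∧
    v ⬝ᵥ w = F.r ∧ u ⬝ᵥ w = F.s ∧ u ⬝ᵥ v = F.t

/-- The form in the basis `u, v - k u, w`. -/
def shear₁₂ (F : TernaryForm) (k : ℤ) : TernaryForm :=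
  ⟨F.a, F.b - 2 * k * F.t + k ^ 2 * F.a, F.c, F.r - k * F.s, F.s, F.t - k * F.a⟩

/-- The form in the basis `u, v, w - k v`. -/
def shear₂₃ (F : TernaryForm) (k : ℤ) : TernaryForm :=
  ⟨F.a, F.b, F.c - 2 * k * F.r + k ^ 2 * F.b, F.r - k * F.b, F.s - k * F.t, F.t⟩

/-- The form in the basis `v, u, w`. -/
def swap₁₂ (F : TernaryForm) : TernaryForm := ⟨F.b, F.a, F.c, F.s, F.r, F.t⟩

/-- The form in the basis `u, w, v`. -/
def swap₂₃ (F : TernaryForm) : TernaryForm := ⟨F.a, F.c, F.b, F.r, F.t, F.s⟩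

/-- Forms on which neither the shears nor the swaps make progress. -/
structure IsReduced (F : TernaryForm) : Prop where
  a_le_b : F.a ≤ F.b
  abs_t_le : |2 * F.t| ≤ F.a
  minor_le_minor : F.minor₁₂ ≤ F.minor₁₃
  abs_mixedMinor_le : |2 * F.mixedMinor| ≤ F.minor₁₂

variable {F : TernaryForm}

lemma IsGram.of_shear₁₂ {k : ℤ} (h : (F.shear₁₂ k).IsGram) : F.IsGram := by
  obtain ⟨u, v, w, ha, hb, hc, hr, hs, ht⟩ := h
  simp only [shear₁₂] at ha hb hc hr hs ht
  refine ⟨u, v + k • u, w, ha, ?_, hc, ?_, hs, ?_⟩ <;>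
    simp only [dotProduct_add, add_dotProduct, dotProduct_smul, smul_dotProduct, smul_eq_mul,
      dotProduct_comm v u, ha, hb, hr, hs, ht] <;> ring

lemma IsGram.of_shear₂₃ {k : ℤ} (h : (F.shear₂₃ k).IsGram) : F.IsGram := by
  obtain ⟨u, v, w, ha, hb, hc, hr, hs, ht⟩ := h
  simp only [shear₂₃] at ha hb hc hr hs ht
  refine ⟨u, v, w + k • v, ha, hb, ?_, ?_, ?_, ht⟩ <;>
    simp only [dotProduct_add, add_dotProduct, dotProduct_smul, smul_dotProduct, smul_eq_mul,
      dotProduct_comm w v, hb, hc, hr, hs, ht] <;> ring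

lemma IsGram.of_swap₁₂ (h : F.swap₁₂.IsGram) : F.IsGram := by
  obtain ⟨u, v, w, ha, hb, hc, hr, hs, ht⟩ := h
  exact ⟨v, u, w, hb, ha, hc, hs, hr, dotProduct_comm v u ▸ ht⟩

lemma IsGram.of_swap₂₃ (h : F.swap₂₃.IsGram) : F.IsGram := by
  obtain ⟨u, v, w, ha, hb, hc, hr, hs, ht⟩ := h
  exact ⟨u, w, v, ha, hc, hb, dotProduct_comm w v ▸ hr, ht, hs⟩

lemma minor₁₂_shear₁₂ (F : TernaryForm) (k : ℤ) : (F.shear₁₂ k).minor₁₂ = F.minor₁₂ := by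
  simp only [minor₁₂, shear₁₂]; ring

lemma minor₁₂_swap₁₂ (F : TernaryForm) : F.swap₁₂.minor₁₂ = F.minor₁₂ := by
  simp only [minor₁₂, swap₁₂]; ring

lemma mixedMinor_shear₂₃ (F : TernaryForm) (k : ℤ) :
    (F.shear₂₃ k).mixedMinor = F.mixedMinor - k * F.minor₁₂ := by
  simp only [mixedMinor, minor₁₂, shear₂₃]; ring

lemma minor₁₂_mul_minor₁₃ (F : TernaryForm) :
    F.minor₁₂ * F.minor₁₃ = F.a * F.det + F.mixedMinor ^ 2 := by
  simp only [minor₁₂, minor₁₃, mixedMinor, det]; ring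

namespace IsPosUnimodular

lemma b_pos (h : F.IsPosUnimodular) : 0 < F.b := by
  have hmul : 0 < F.a * F.b := by
    have := h.minor_pos
    rw [minor₁₂] at this
    linarith [sq_nonneg F.t]
  exact pos_of_mul_pos_right hmul h.a_pos.le

lemma minor₁₃_pos (h : F.IsPosUnimodular) : 0 < F.minor₁₃ := by
  have hmul : 0 < F.minor₁₂ * F.minor₁₃ := by
    rw [minor₁₂_mul_minor₁₃, h.det_eq_one]
    linarith [sq_nonneg F.mixedMinor, h.a_pos]
  exact pos_of_mul_pos_right hmul h.minor_pos.le

lemma shear₁₂ (h : F.IsPosUnimodular) (k : ℤ) : (F.shear₁₂ k).IsPosUnimodular where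
  a_pos := h.a_pos
  minor_pos := (minor₁₂_shear₁₂ F k).symm ▸ h.minor_pos
  det_eq_one := by
    rw [← h.det_eq_one]
    simp only [det, TernaryForm.shear₁₂]; ring

lemma shear₂₃ (h : F.IsPosUnimodular) (k : ℤ) : (F.shear₂₃ k).IsPosUnimodular where
  a_pos := h.a_pos
  minor_pos := h.minor_pos
  det_eq_one := by
    rw [← h.det_eq_one]
    simp only [det, TernaryForm.shear₂₃]; ring

lemma swap₁₂ (h : F.IsPosUnimodular) : F.swap₁₂.IsPosUnimodular where
  a_pos := h.b_pos
  minor_pos := (minor₁₂_swap₁₂ F).symm ▸ h.minor_pos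
  det_eq_one := by
    rw [← h.det_eq_one]
    simp only [det, TernaryForm.swap₁₂]; ring

lemma swap₂₃ (h : F.IsPosUnimodular) : F.swap₂₃.IsPosUnimodular where
  a_pos := h.a_pos
  minor_pos := h.minor₁₃_pos
  det_eq_one := by
    rw [← h.det_eq_one]
    simp only [det, TernaryForm.swap₂₃]; ring

-- With `D = minor₁₂`, reducedness gives `3 a² ≤ 4 D` and `3 D² ≤ 4 a`.
lemma a_eq_one_and_minor₁₂_eq_one (h : F.IsPosUnimodular) (hred : F.IsReduced) :
    F.a = 1 ∧ F.minor₁₂ = 1 := by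
  have ha := h.a_pos
  have hD := h.minor_pos
  have ht : (2 * F.t) ^ 2 ≤ F.a ^ 2 := sq_le_sq.2 (hred.abs_t_le.trans (le_abs_self _))
  have hg : (2 * F.mixedMinor) ^ 2 ≤ F.minor₁₂ ^ 2 :=
    sq_le_sq.2 (hred.abs_mixedMinor_le.trans (le_abs_self _))
  have haD : 3 * F.a ^ 2 ≤ 4 * F.minor₁₂ := by
    have hab := mul_le_mul_of_nonneg_left hred.a_le_b ha.le
    rw [minor₁₂]
    linarith
  have hDa : 3 * F.minor₁₂ ^ 2 ≤ 4 * F.a := by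
    have hDE := mul_le_mul_of_nonneg_left hred.minor_le_minor hD.le
    rw [minor₁₂_mul_minor₁₃, h.det_eq_one] at hDE
    linarith
  have ha_le : F.a ≤ 1 := by
    by_contra! hlt
    have : F.minor₁₂ < F.a := by nlinarith
    nlinarith
  exact ⟨by omega, by nlinarith⟩

lemma isGram_of_isReduced (h : F.IsPosUnimodular) (hred : F.IsReduced) : F.IsGram := by
  obtain ⟨ha, hD⟩ := h.a_eq_one_and_minor₁₂_eq_one hred
  have ht : F.t = 0 := by
    have := abs_le.1 hred.abs_t_le
    omega
  have hr : F.r = 0 := by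
    have := abs_le.1 hred.abs_mixedMinor_le
    rw [mixedMinor, ha, hD, ht] at this
    omega
  have hb : F.b = 1 := by
    rw [minor₁₂, ha, ht] at hD
    linarith
  have hc : F.c = F.s ^ 2 + 1 := by
    have := h.det_eq_one
    rw [det, ha, hb, hr, ht] at this
    linarith
  refine ⟨![1, 0, 0], ![0, 1, 0], ![F.s, 0, 1], ?_⟩
  simp [ha, hb, hc, hr, ht, sq]

end IsPosUnimodular

end TernaryForm

lemma exists_abs_two_mul_sub_mul_le (t : ℤ) {a : ℤ} (ha : 0 < a) :
    ∃ k : ℤ, |2 * (t - k * a)| ≤ a := by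
  refine ⟨(2 * t + a) / (2 * a), abs_le.2 ?_⟩
  have hlt := Int.lt_mul_ediv_self_add (x := 2 * t + a) (k := 2 * a) (by linarith)
  have hle := Int.mul_ediv_self_le (x := 2 * t + a) (k := 2 * a) (by linarith)
  constructor <;> linarith

theorem TernaryForm.IsPosUnimodular.isGram {F : TernaryForm} (h : F.IsPosUnimodular) :
    F.IsGram := by
  induction hm : (F.a + F.minor₁₂).toNat using Nat.strong_induction_on generalizing F with
  | _ m ih =>
    subst hm
    have descend (G : TernaryForm) (hG : G.IsPosUnimodular)
        (hlt : G.a + G.minor₁₂ < F.a + F.minor₁₂) : G.IsGram :=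
      ih _ ((Int.toNat_lt_toNat (by linarith [hG.a_pos, hG.minor_pos])).2 hlt) hG rfl
    obtain ⟨k, hk⟩ := exists_abs_two_mul_sub_mul_le F.t h.a_pos
    have h₁ := h.shear₁₂ k
    apply IsGram.of_shear₁₂ (k := k)
    rcases lt_or_ge (F.shear₁₂ k).b F.a with hba | hab
    · apply IsGram.of_swap₁₂
      exact descend _ h₁.swap₁₂ (by rw [minor₁₂_swap₁₂, minor₁₂_shear₁₂]; gcongr; exact hba)
    obtain ⟨j, hj⟩ := exists_abs_two_mul_sub_mul_le (F.shear₁₂ k).mixedMinor h₁.minor_pos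
    rw [← mixedMinor_shear₂₃] at hj
    have h₂ := h₁.shear₂₃ j
    apply IsGram.of_shear₂₃ (k := j)
    rcases lt_or_ge ((F.shear₁₂ k).shear₂₃ j).minor₁₃ (F.shear₁₂ k).minor₁₂ with hED | hDE
    · apply IsGram.of_swap₂₃
      exact descend _ h₂.swap₂₃ (by rw [← minor₁₂_shear₁₂ F k]; exact add_lt_add_right hED _)
    · exact h₂.isGram_of_isReduced ⟨hab, hk, hDE, hj⟩

/-! ### The three-squares theorem -/

/-- Sums of three integer squares. -/
def IsSumThreeSq (n : ℤ) : Prop := ∃ x y z : ℤ, x ^ 2 + y ^ 2 + z ^ 2 = n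

-- The form with matrix `!![a, t, 1; t, d * n - 1, 0; 1, 0, n]`, where
-- `a * (d * n - 1) = t ^ 2 + d`, has determinant one and represents `n`.
lemma isSumThreeSq_of_dvd_sq_add {n d t : ℤ} (hd : 0 < d) (hdn : 1 < d * n)
    (h : d * n - 1 ∣ t ^ 2 + d) : IsSumThreeSq n := by
  obtain ⟨a, ha⟩ := h
  have ha_pos : 0 < a := by
    have : 0 < (d * n - 1) * a := by rw [← ha]; positivity
    exact pos_of_mul_pos_right this (by linarith)
  have hF : TernaryForm.IsPosUnimodular ⟨a, d * n - 1, n, 0, 1, t⟩ :=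
    { a_pos := ha_pos
      minor_pos := by rw [TernaryForm.minor₁₂]; linarith
      det_eq_one := by rw [TernaryForm.det]; linear_combination -n * ha }
  obtain ⟨-, -, w, -, -, hw, -⟩ := hF.isGram
  exact ⟨w 0, w 1, w 2, by simpa [dotProduct, Fin.sum_univ_three, sq] using hw⟩

lemma exists_dvd_sq_add_of_jacobiSym_eq_one {p : ℕ} [Fact p.Prime] {d : ℤ}
    (h : J(-d | p) = 1) : ∃ t : ℤ, (p : ℤ) ∣ t ^ 2 + d := by
  obtain ⟨y, hy⟩ := ZMod.isSquare_of_jacobiSym_eq_one h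
  obtain ⟨t, rfl⟩ := ZMod.intCast_surjective y
  refine ⟨t, (ZMod.intCast_zmod_eq_zero_iff_dvd _ p).1 ?_⟩
  push_cast at hy ⊢
  rw [sq, ← hy, neg_add_cancel]

lemma exists_two_mul_dvd_sq_add {p d t : ℤ} (hp : Odd p) (hd : Odd d) (h : p ∣ t ^ 2 + d) :
    ∃ t' : ℤ, 2 * p ∣ t' ^ 2 + d := by
  obtain ⟨t', ht'_odd, ht'⟩ : ∃ t' : ℤ, Odd t' ∧ p ∣ t' ^ 2 + d := by
    rcases Int.even_or_odd t with ht | ht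
    · refine ⟨t + p, ht.add_odd hp, ?_⟩
      have : (t + p) ^ 2 + d = t ^ 2 + d + p * (2 * t + p) := by ring
      exact this ▸ h.add (dvd_mul_right _ _)
    · exact ⟨t, ht, h⟩
  have htwo : 2 ∣ t' ^ 2 + d := (ht'_odd.pow.add_odd hd).two_dvd
  exact ⟨t', (Int.isCoprime_two_left.2 hp).mul_dvd htwo ht'⟩

lemma jacobiSym_neg_eq_of_mod_four {d p : ℕ} (hd : Odd d) (hp : Odd p)
    (h : p % 4 = 1 ∨ d % 4 = 3) : J(-d | p) = J(p | d) := by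
  rw [jacobiSym.neg _ hp]
  rcases Nat.odd_mod_four_iff.1 (Nat.odd_iff.1 hp) with hp4 | hp4
  · rw [ZMod.χ₄_nat_one_mod_four hp4, one_mul,
      jacobiSym.quadratic_reciprocity_one_mod_four' hd hp4]
  · rw [ZMod.χ₄_nat_three_mod_four hp4,
      jacobiSym.quadratic_reciprocity_three_mod_four (h.resolve_left (by omega)) hp4]
    ring

lemma jacobiSym_neg_eq_one_of_dvd_add_one {d p : ℕ} (hd : d % 4 = 1) (hp : p % 4 = 1)
    (h : d ∣ p + 1) : J(-d | p) = 1 := by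
  have hd_odd : Odd d := Nat.odd_iff.2 (by omega)
  have hmod : (p : ℤ) ≡ -1 [ZMOD d] :=
    (Int.modEq_iff_dvd.2 (by rw [sub_neg_eq_add]; exact_mod_cast h)).symm
  rw [jacobiSym_neg_eq_of_mod_four hd_odd (Nat.odd_iff.2 (by omega)) (.inl hp),
    jacobiSym.mod_left' hmod, jacobiSym.at_neg_one hd_odd, ZMod.χ₄_nat_one_mod_four hd]

lemma jacobiSym_neg_eq_one_of_dvd_two_mul_add_one {d p : ℕ} (hp : Odd p)
    (hdp : d % 8 = 1 ∧ p % 4 = 1 ∨ d % 8 = 3) (h : d ∣ 2 * p + 1) : J(-d | p) = 1 := by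
  have hd_odd : Odd d := Nat.odd_iff.2 (by omega)
  have hmod : (2 * p : ℤ) ≡ -1 [ZMOD d] :=
    (Int.modEq_iff_dvd.2 (by rw [sub_neg_eq_add]; exact_mod_cast h)).symm
  have hmul : J(2 | d) * J(p | d) = J(-1 | d) := by
    rw [← jacobiSym.mul_left, jacobiSym.mod_left' hmod]
  rw [jacobiSym_neg_eq_of_mod_four hd_odd hp (by omega)]
  rw [jacobiSym.at_two hd_odd, jacobiSym.at_neg_one hd_odd, ZMod.χ₈_nat_eq_if_mod_eight,
    ZMod.χ₄_nat_eq_if_mod_four] at hmul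
  rcases hdp with ⟨hd, -⟩ | hd <;>
    simpa [hd, show d % 2 = 1 by omega, show d % 4 = d % 8 % 4 by omega] using hmul

lemma exists_prime_eq_add_four_mul {e n : ℕ} (hn : n ≠ 0) (he : Odd e) (hen : e.Coprime n) :
    ∃ p v : ℕ, p.Prime ∧ p = e + 4 * n * v := by
  have hcop : e.Coprime (4 * n) := (he.coprime_two_right.pow_right 2).mul_right hen
  obtain ⟨p, hep, hp, hmod⟩ := Nat.forall_exists_prime_gt_and_modEq e (by positivity) hcop
  obtain ⟨v, hv⟩ := (Nat.modEq_iff_dvd' hep.le).1 hmod.symm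
  exact ⟨p, v, hp, by omega⟩

lemma isSumThreeSq_of_mod_four_eq_two {n : ℕ} (hn : n % 4 = 2) : IsSumThreeSq n := by
  have hcop : (n - 1).Coprime n := by
    obtain ⟨m, rfl⟩ : ∃ m, n = m + 1 := ⟨n - 1, by omega⟩
    simp
  obtain ⟨p, v, hp, hpv⟩ :=
    exists_prime_eq_add_four_mul (by omega) (Nat.odd_iff.2 (by omega)) hcop
  have hdn : p + 1 = (4 * v + 1) * n := by
    rw [add_mul, one_mul, mul_right_comm]; omega
  have hp4 : p % 4 = 1 := by
    rw [hpv, mul_assoc]; omega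
  have := Fact.mk hp
  obtain ⟨t, ht⟩ := exists_dvd_sq_add_of_jacobiSym_eq_one
    (jacobiSym_neg_eq_one_of_dvd_add_one (d := 4 * v + 1) (by omega) hp4 ⟨n, hdn⟩)
  have hdn' : ((4 * v + 1 : ℕ) : ℤ) * n - 1 = p := by
    rw [sub_eq_iff_eq_add]; exact_mod_cast hdn.symm
  exact isSumThreeSq_of_dvd_sq_add (by positivity) (by linarith [hp.one_lt]) (hdn' ▸ ht)

-- Dirichlet's theorem supplies a prime `p` with `d * n = 2 * p + 1`, where `d = 8 * v + c`.
lemma isSumThreeSq_of_mul_eq_two_mul_add_one {n c e : ℕ} (hcn : c * n = 2 * e + 1)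
    (he : Odd e) (hce : c = 1 ∧ e % 4 = 1 ∨ c = 3) : IsSumThreeSq n := by
  have hn : n ≠ 0 := by rintro rfl; omega
  have hcop : e.Coprime n := by
    have : e.Coprime (c * n) := by simp [hcn]
    exact this.coprime_mul_left_right
  obtain ⟨p, v, hp, hpv⟩ := exists_prime_eq_add_four_mul hn he hcop
  rw [mul_assoc] at hpv
  have hp_odd : Odd p := by
    rw [Nat.odd_iff] at he ⊢; omega
  have hdn : 2 * p + 1 = (8 * v + c) * n := by
    rw [hpv, add_mul, hcn]; ring
  have hd_odd : Odd (8 * v + c) := Nat.odd_iff.2 (by omega)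
  have := Fact.mk hp
  obtain ⟨t, ht⟩ := exists_dvd_sq_add_of_jacobiSym_eq_one
    (jacobiSym_neg_eq_one_of_dvd_two_mul_add_one (d := 8 * v + c) hp_odd (by omega) ⟨n, hdn⟩)
  obtain ⟨t', ht'⟩ := exists_two_mul_dvd_sq_add (mod_cast hp_odd) (mod_cast hd_odd) ht
  have hdn' : ((8 * v + c : ℕ) : ℤ) * n - 1 = 2 * p := by
    rw [sub_eq_iff_eq_add]; exact_mod_cast hdn.symm
  exact isSumThreeSq_of_dvd_sq_add (by exact_mod_cast hd_odd.pos) (by linarith [hp.one_lt])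
    (hdn' ▸ ht')

lemma IsSumThreeSq.four_mul {n : ℤ} (h : IsSumThreeSq n) : IsSumThreeSq (4 * n) := by
  obtain ⟨x, y, z, h⟩ := h
  exact ⟨2 * x, 2 * y, 2 * z, by linear_combination 4 * h⟩

theorem isSumThreeSq_of_forall_ne {n : ℕ} (h : ∀ a b : ℕ, n ≠ 4 ^ a * (8 * b + 7)) :
    IsSumThreeSq n := by
  induction n using Nat.strong_induction_on with
  | _ n ih =>
    have h7 : n % 8 ≠ 7 := fun h7 ↦ h 0 (n / 8) (by omega)
    rcases (by omega : n = 0 ∨ n ≠ 0 ∧ n % 4 = 0 ∨ n % 4 = 2 ∨ n % 8 = 3 ∨ n % 4 = 1) with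
      rfl | ⟨h0, h4⟩ | h2 | h3 | h1
    · exact ⟨0, 0, 0, by simp⟩
    · obtain ⟨m, rfl⟩ : 4 ∣ n := Nat.dvd_of_mod_eq_zero h4
      push_cast
      refine (ih m (by omega) fun a b hab ↦ h (a + 1) b ?_).four_mul
      rw [hab, pow_succ']; ring
    · exact isSumThreeSq_of_mod_four_eq_two h2
    · exact isSumThreeSq_of_mul_eq_two_mul_add_one (c := 1) (e := (n - 1) / 2) (by omega)
        (Nat.odd_iff.2 (by omega)) (by omega)
    · exact isSumThreeSq_of_mul_eq_two_mul_add_one (c := 3) (e := (3 * n - 1) / 2) (by omega)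
        (Nat.odd_iff.2 (by omega)) (by omega)

/-- A congruence condition implying that `n` is a sum of three squares: it excludes the numbers
`4 ^ a * (8 * b + 7)` for `a ≤ 2`, and with the multiples of `64` all those with larger `a`. -/
def IsThreeSqAdmissible (n : ℤ) : Prop :=
  0 ≤ n ∧ n % 8 ≠ 7 ∧ n % 32 ≠ 28 ∧ n % 128 ≠ 112 ∧ n % 64 ≠ 0

lemma IsThreeSqAdmissible.isSumThreeSq {n : ℤ} (h : IsThreeSqAdmissible n) :
    IsSumThreeSq n := by
  obtain ⟨hn, h8, h32, h128, h64⟩ := h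
  lift n to ℕ using hn
  refine isSumThreeSq_of_forall_ne fun a b hab ↦ ?_
  rcases a with _ | _ | _ | a
  · omega
  · omega
  · omega
  · have : n = 64 * (4 ^ a * (8 * b + 7)) := by rw [hab]; ring
    omega

/-! ### Ternary forms derived from sums of three squares -/

lemma sq_emod_three (x : ℤ) : x ^ 2 % 3 = if 3 ∣ x then 0 else 1 := by
  split_ifs with h
  · exact Int.emod_eq_zero_of_dvd (dvd_pow h two_ne_zero)
  · rcases (by omega : x % 3 = 1 ∨ x % 3 = 2) with h | h <;> simp [sq, Int.mul_emod, h]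

lemma sq_emod_sixteen (x : ℤ) : x ^ 2 % 16 ∈ ({0, 1, 4, 9} : Finset ℤ) := by
  have hx : x % 16 ∈ Finset.Ico 0 16 := by simp; omega
  have hsq : x ^ 2 % 16 = (x % 16) ^ 2 % 16 := by rw [sq, sq, Int.mul_emod]
  rw [hsq]
  generalize x % 16 = r at hx
  revert r
  decide

lemma exists_sq_eq_three_mul_add_one_sq {a : ℤ} (ha : ¬3 ∣ a) :
    ∃ i : ℤ, a ^ 2 = (3 * i + 1) ^ 2 := by
  rcases (by omega : a % 3 = 1 ∨ a % 3 = 2) with h | h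
  · exact ⟨a / 3, by congr 1; omega⟩
  · exact ⟨-a / 3, by rw [← neg_sq]; congr 1; omega⟩

lemma exists_sq_add_two_mul_sq_add_sq_of_isSumThreeSq {m : ℤ} (h : IsSumThreeSq (2 * m)) :
    ∃ x y w : ℤ, x ^ 2 + 2 * y ^ 2 + w ^ 2 = m := by
  have of_even {p q r : ℤ} (h : p ^ 2 + q ^ 2 + r ^ 2 = 2 * m) (hr : 2 ∣ r) :
      ∃ x y w : ℤ, x ^ 2 + 2 * y ^ 2 + w ^ 2 = m := by
    obtain ⟨l, rfl⟩ := hr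
    have hpq : Even (p - q) := by
      have : Even (p ^ 2 + q ^ 2) := ⟨m - 2 * l ^ 2, by linear_combination h⟩
      simpa [Int.even_add, Int.even_sub, Int.even_pow] using this
    obtain ⟨k, hk⟩ := hpq.two_dvd
    obtain rfl : p = q + 2 * k := by linarith
    exact ⟨q + k, l, k, by linarith⟩
  obtain ⟨p, q, r, h⟩ := h
  by_cases hr : 2 ∣ r
  · exact of_even h hr
  by_cases hq : 2 ∣ q
  · exact of_even (p := p) (q := r) (by linarith) hq
  have hp : Even p := by
    have : Even (p ^ 2 + q ^ 2 + r ^ 2) := h ▸ even_two_mul m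
    rw [← even_iff_two_dvd] at hq hr
    simpa [Int.even_add, Int.even_pow, hq, hr] using this
  exact of_even (p := q) (q := r) (by linarith) hp.two_dvd

-- In `ℤ[√-2]`, multiply `c + d√-2` by one of the two elements `-1 ± 2√-2` of norm nine.
lemma exists_nine_mul_sq_add_two_mul_sq_of_not_dvd {c d : ℤ} (h : ¬3 ∣ c ∨ ¬3 ∣ d) :
    ∃ w y : ℤ, ¬3 ∣ w ∧ w ^ 2 + 2 * y ^ 2 = 9 * (c ^ 2 + 2 * d ^ 2) := by
  by_cases h3 : 3 ∣ -c - 4 * d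
  · exact ⟨-c + 4 * d, 2 * c + d, by omega, by ring⟩
  · exact ⟨-c - 4 * d, 2 * c - d, h3, by ring⟩

lemma exists_nine_mul_sq_add_two_mul_sq {c d : ℤ} (h : c ≠ 0 ∨ d ≠ 0) :
    ∃ w y : ℤ, ¬3 ∣ w ∧ w ^ 2 + 2 * y ^ 2 = 9 * (c ^ 2 + 2 * d ^ 2) := by
  induction hm : c.natAbs + d.natAbs using Nat.strong_induction_on generalizing c d with
  | _ m ih =>
    by_cases h3 : ¬3 ∣ c ∨ ¬3 ∣ d
    · exact exists_nine_mul_sq_add_two_mul_sq_of_not_dvd h3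
    · push Not at h3
      obtain ⟨⟨c, rfl⟩, ⟨d, rfl⟩⟩ := h3
      obtain ⟨w, y, hw, hwy⟩ := ih _ (by omega) (c := c) (d := d) (by omega) rfl
      obtain ⟨w', y', hw', hwy'⟩ :=
        exists_nine_mul_sq_add_two_mul_sq_of_not_dvd (c := w) (d := y) (.inl hw)
      exact ⟨w', y', hw', by rw [hwy', hwy]; ring⟩

lemma exists_not_three_dvd_of_sq_add_two_mul_sq_add_sq {m x y w : ℤ} (hm : 0 < m)
    (hm3 : m % 3 ≠ 2) (h : x ^ 2 + 2 * y ^ 2 + w ^ 2 = m) :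
    ∃ x y w : ℤ, ¬3 ∣ w ∧ x ^ 2 + 2 * y ^ 2 + w ^ 2 = m := by
  by_cases hw : 3 ∣ w; swap
  · exact ⟨x, y, w, hw, h⟩
  by_cases hx : 3 ∣ x; swap
  · exact ⟨w, y, x, hx, by linarith⟩
  have hy : 3 ∣ y := by
    have := sq_emod_three x
    have := sq_emod_three y
    have := sq_emod_three w
    omega
  obtain ⟨⟨x, rfl⟩, ⟨y, rfl⟩, ⟨w, rfl⟩⟩ := And.intro hx (And.intro hy hw)
  by_cases hwy : w ≠ 0 ∨ y ≠ 0
  · obtain ⟨a, b, ha, hab⟩ := exists_nine_mul_sq_add_two_mul_sq hwy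
    exact ⟨3 * x, b, a, ha, by linarith⟩
  · obtain ⟨rfl, rfl⟩ : w = 0 ∧ y = 0 := by simpa using hwy
    have hx0 : x ≠ 0 := by rintro rfl; simp at h; omega
    obtain ⟨a, b, ha, hab⟩ := exists_nine_mul_sq_add_two_mul_sq (d := 0) (.inl hx0)
    exact ⟨0, b, a, ha, by linarith⟩

lemma IsSumThreeSq.exists_three_mul_add_one {n : ℤ} (h : IsSumThreeSq n) (h3 : 3 ∣ n)
    (h9 : ¬9 ∣ n) :
    ∃ i j k : ℤ, (3 * i + 1) ^ 2 + (3 * j + 1) ^ 2 + (3 * k + 1) ^ 2 = n := by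
  obtain ⟨p, q, r, h⟩ := h
  have hp := sq_emod_three p
  have hq := sq_emod_three q
  have hr := sq_emod_three r
  have hp3 : ¬3 ∣ p := fun hp3 ↦ by
    obtain ⟨⟨p, rfl⟩, ⟨q, rfl⟩, ⟨r, rfl⟩⟩ : 3 ∣ p ∧ 3 ∣ q ∧ 3 ∣ r := by omega
    exact h9 ⟨p ^ 2 + q ^ 2 + r ^ 2, by rw [← h]; ring⟩
  obtain ⟨i, hi⟩ := exists_sq_eq_three_mul_add_one_sq hp3
  obtain ⟨j, hj⟩ := exists_sq_eq_three_mul_add_one_sq (a := q) (by omega)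
  obtain ⟨k, hk⟩ := exists_sq_eq_three_mul_add_one_sq (a := r) (by omega)
  exact ⟨i, j, k, by rw [← hi, ← hj, ← hk, h]⟩

lemma exists_sq_add_mul_add_sq_eq (a b : ℤ) :
    ∃ y z : ℤ, a ^ 2 + a * b + b ^ 2 = y ^ 2 + 3 * z ^ 2 := by
  rcases (by omega : 2 ∣ a ∨ 2 ∣ b ∨ 2 ∣ a + b) with ⟨k, rfl⟩ | ⟨k, rfl⟩ | ⟨k, hk⟩
  · exact ⟨b + k, k, by ring⟩
  · exact ⟨a + k, k, by ring⟩
  · obtain rfl : b = 2 * k - a := by linarith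
    exact ⟨a - k, k, by ring⟩

lemma exists_sq_add_two_mul_sq_add_six_mul_sq {m : ℤ} (hm : ¬3 ∣ m)
    (h : IsSumThreeSq (3 * m)) : ∃ x y z : ℤ, x ^ 2 + 2 * y ^ 2 + 6 * z ^ 2 = m := by
  obtain ⟨i, j, k, hijk⟩ := h.exists_three_mul_add_one (by omega) (by omega)
  obtain ⟨y, z, hyz⟩ := exists_sq_add_mul_add_sq_eq (i - j) (j - k)
  exact ⟨i + j + k + 1, y, z, by linarith⟩

lemma exists_sq_add_two_mul_sq_add_three_mul_sq {m : ℤ} (hm : m % 3 = 2)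
    (h : IsSumThreeSq (3 * m)) :
    ∃ x y s : ℤ, ¬3 ∣ s ∧ x ^ 2 + 2 * y ^ 2 + 3 * s ^ 2 = 2 * m := by
  obtain ⟨i, j, k, hijk⟩ := h.exists_three_mul_add_one (by omega) (by omega)
  have hsum : m = 3 * (i ^ 2 + j ^ 2 + k ^ 2) + 2 * (i + j + k) + 1 := by linarith
  have hdiff : ¬3 ∣ i - j ∨ ¬3 ∣ j - k := by omega
  rcases hdiff with hij | hjk
  · exact ⟨i + j - 2 * k, i + j + k + 1, i - j, hij, by linarith⟩
  · exact ⟨j + k - 2 * i, i + j + k + 1, j - k, hjk, by linarith⟩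

lemma exists_not_three_dvd_of_forall_sq_ne {m x s w : ℤ} (hm3 : m % 3 = 1)
    (hm : ∀ k : ℤ, k ^ 2 ≠ m) (h : x ^ 2 + 2 * s ^ 2 + w ^ 2 = m) :
    ∃ x s w : ℤ, ¬3 ∣ w ∧ ¬3 ∣ s ∧ x ^ 2 + 2 * s ^ 2 + w ^ 2 = m := by
  have hx := sq_emod_three x
  have hs := sq_emod_three s
  have hw := sq_emod_three w
  have of_dvd {x s w : ℤ} (h : x ^ 2 + 2 * s ^ 2 + w ^ 2 = m) (hs : 3 ∣ s) (hw : 3 ∣ w) :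
      ∃ x s w : ℤ, ¬3 ∣ w ∧ ¬3 ∣ s ∧ x ^ 2 + 2 * s ^ 2 + w ^ 2 = m := by
    obtain ⟨⟨d, rfl⟩, ⟨c, rfl⟩⟩ := And.intro hs hw
    have hcd : c ≠ 0 ∨ d ≠ 0 := by
      by_contra! hcd
      exact hm x (by rw [← h, hcd.1, hcd.2]; ring)
    obtain ⟨a, b, ha, hab⟩ := exists_nine_mul_sq_add_two_mul_sq hcd
    have hb : ¬3 ∣ b := by
      have := sq_emod_three a
      have := sq_emod_three b
      omega
    exact ⟨x, b, a, ha, hb, by linarith⟩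
  rcases (by omega : ¬3 ∣ w ∧ ¬3 ∣ s ∨ 3 ∣ s ∧ 3 ∣ w ∨ 3 ∣ s ∧ 3 ∣ x) with
    ⟨hw, hs⟩ | ⟨hs, hw⟩ | ⟨hs, hx⟩
  · exact ⟨x, s, w, hw, hs, h⟩
  · exact of_dvd h hs hw
  · exact of_dvd (x := w) (by linarith) hs hx

/-- A congruence condition implying that `m` is of the form `x² + 2y² + w²` with `3 ∤ w`. The
conditions modulo powers of two are those for `2 * m` to be `IsThreeSqAdmissible`. -/
def IsAdmissible (m : ℤ) : Prop :=
  0 < m ∧ m % 3 ≠ 2 ∧ m % 16 ≠ 14 ∧ m % 64 ≠ 56 ∧ m % 32 ≠ 0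

lemma IsAdmissible.exists_sq_add_two_mul_sq_add_sq {m : ℤ} (h : IsAdmissible m) :
    ∃ x y w : ℤ, ¬3 ∣ w ∧ x ^ 2 + 2 * y ^ 2 + w ^ 2 = m := by
  obtain ⟨hm, h3, h16, h64, h32⟩ := h
  have hsum : IsThreeSqAdmissible (2 * m) := by
    simp only [IsThreeSqAdmissible]
    omega
  obtain ⟨x, y, w, hxyw⟩ := exists_sq_add_two_mul_sq_add_sq_of_isSumThreeSq hsum.isSumThreeSq
  exact exists_not_three_dvd_of_sq_add_two_mul_sq_add_sq hm h3 hxyw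

/-! ### The forms `x² + 2y² + w² + f(z)` with `3 ∤ w` -/

/-- The generalized octagonal number `P₈(t)`. -/
def octagonal (t : ℤ) : ℤ := 3 * t ^ 2 - 2 * t

lemma exists_three_mul_octagonal_add_one_eq_sq {s : ℤ} (hs : ¬3 ∣ s) :
    ∃ t : ℤ, 3 * octagonal t + 1 = s ^ 2 := by
  obtain ⟨i, hi⟩ := exists_sq_eq_three_mul_add_one_sq hs
  exact ⟨-i, by rw [hi, octagonal]; ring⟩

lemma octagonal_one_sub_two_mul (t : ℤ) : octagonal (1 - 2 * t) = 4 * octagonal t + 1 := by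
  simp only [octagonal]; ring

/-- Representability of `n` by `x² + 2y² + w² + f z` with `3 ∤ w`. Since
`3 P₈(t) + 1 = (3t - 1)²`, this is representability of `n - 1` by `x² + 2y² + 3 P₈(t) + f z`. -/
def IsRepresentedWith (f : ℤ → ℤ) (n : ℤ) : Prop :=
  ∃ x y w z : ℤ, ¬3 ∣ w ∧ x ^ 2 + 2 * y ^ 2 + w ^ 2 + f z = n

lemma IsRepresentedWith.exists_octagonal {f : ℤ → ℤ} {n : ℤ} (h : IsRepresentedWith f (n + 1)) :
    ∃ x y z t : ℤ, x ^ 2 + 2 * y ^ 2 + f z + 3 * octagonal t = n := by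
  obtain ⟨x, y, w, z, hw, h⟩ := h
  obtain ⟨t, ht⟩ := exists_three_mul_octagonal_add_one_eq_sq hw
  exact ⟨x, y, z, t, by linarith⟩

lemma IsAdmissible.isRepresentedWith {f : ℤ → ℤ} {n : ℤ} (z : ℤ) (h : IsAdmissible (n - f z)) :
    IsRepresentedWith f n := by
  obtain ⟨x, y, w, hw, h⟩ := h.exists_sq_add_two_mul_sq_add_sq
  exact ⟨x, y, w, z, hw, by linarith⟩

lemma forall_pos_of_four_mul_add {P : ℤ → Prop} {b : ℤ} (hb : 0 ≤ b)
    (step : ∀ n, P n → P (4 * n + b)) (base : ∀ n, 0 < n → (4 ∣ n - b → n ≤ b) → P n)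
    {n : ℤ} (hn : 0 < n) : P n := by
  induction hm : n.toNat using Nat.strong_induction_on generalizing n with
  | _ m ih =>
    by_cases h : 4 ∣ n - b → n ≤ b
    · exact base n hn h
    · push Not at h
      obtain ⟨⟨k, hk⟩, hlt⟩ := h
      obtain rfl : n = 4 * k + b := by linarith
      exact step k (ih _ (by omega) (by omega) rfl)

lemma isRepresentedWith_mul_sq_of_base {c : ℤ}
    (base : ∀ n, 0 < n → ¬4 ∣ n → IsRepresentedWith (fun z ↦ c * z ^ 2) n) {n : ℤ}
    (hn : 0 < n) : IsRepresentedWith (fun z ↦ c * z ^ 2) n := by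
  refine forall_pos_of_four_mul_add le_rfl ?_ (fun m hm h ↦ base m hm (by omega)) hn
  rintro m ⟨x, y, w, z, hw, h⟩
  exact ⟨2 * x, 2 * y, 2 * w, 2 * z, by omega, by linear_combination 4 * h⟩

lemma isRepresentedWith_mul_octagonal_of_base {c : ℤ} (hc : 0 ≤ c)
    (base : ∀ n, 0 < n → (4 ∣ n - c → n ≤ c) → IsRepresentedWith (fun z ↦ c * octagonal z) n)
    {n : ℤ} (hn : 0 < n) : IsRepresentedWith (fun z ↦ c * octagonal z) n := by
  refine forall_pos_of_four_mul_add hc ?_ base hn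
  rintro m ⟨x, y, w, z, hw, h⟩
  exact ⟨2 * x, 2 * y, 2 * w, 1 - 2 * z, by omega, by
    linear_combination 4 * h + c * octagonal_one_sub_two_mul z⟩

/-! ### Square last term -/

lemma isRepresentedWith_six_mul_sq_of_isSumThreeSq {n w : ℤ} (hn : n % 3 = 2) (hw : ¬3 ∣ w)
    (h : IsSumThreeSq (3 * (n - w ^ 2))) : IsRepresentedWith (fun z ↦ 6 * z ^ 2) n := by
  have hm : ¬3 ∣ n - w ^ 2 := by
    have := sq_emod_three w
    omega
  obtain ⟨x, y, z, hxyz⟩ := exists_sq_add_two_mul_sq_add_six_mul_sq hm h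
  exact ⟨x, y, w, z, hw, by linarith⟩

lemma isRepresentedWith_six_mul_sq {n : ℤ} (hn : 0 < n) :
    IsRepresentedWith (fun z ↦ 6 * z ^ 2) n := by
  by_cases hn3 : n % 3 = 2
  · have hcases : ∃ w ∈ [1, 2, 4], IsThreeSqAdmissible (3 * (n - w ^ 2)) := by
      simp only [IsThreeSqAdmissible, List.mem_cons, List.not_mem_nil, or_false,
        exists_eq_or_imp, exists_eq_left]
      omega
    obtain ⟨w, hw, h⟩ := hcases
    have hw3 : ¬3 ∣ w := by fin_cases hw <;> decide
    exact isRepresentedWith_six_mul_sq_of_isSumThreeSq hn3 hw3 h.isSumThreeSq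
  · have hcases : ∃ z ∈ [0, 1, 2], IsAdmissible (n - 6 * z ^ 2) := by
      simp only [IsAdmissible, List.mem_cons, List.not_mem_nil,
        or_false, exists_eq_or_imp, exists_eq_left]
      omega
    obtain ⟨z, -, hz⟩ := hcases
    exact hz.isRepresentedWith z

lemma isRepresentedWith_seven_mul_sq {n : ℤ} (hn : 0 < n) :
    IsRepresentedWith (fun z ↦ 7 * z ^ 2) n := by
  refine isRepresentedWith_mul_sq_of_base (fun n hn hn4 ↦ ?_) hn
  have hcases : n = 2 ∨ n = 5 ∨ n = 30 ∨
      ∃ z ∈ [0, 1, 2, 3], IsAdmissible (n - 7 * z ^ 2) := by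
    simp only [IsAdmissible, List.mem_cons, List.not_mem_nil,
      or_false, exists_eq_or_imp, exists_eq_left]
    omega
  rcases hcases with rfl | rfl | rfl | ⟨z, -, hz⟩
  · exact ⟨1, 0, 1, 0, by decide⟩
  · exact ⟨2, 0, 1, 0, by decide⟩
  · exact ⟨2, 3, 1, 1, by decide⟩
  · exact hz.isRepresentedWith z

lemma isRepresentedWith_eight_mul_sq {n : ℤ} (hn : 0 < n) :
    IsRepresentedWith (fun z ↦ 8 * z ^ 2) n := by
  refine isRepresentedWith_mul_sq_of_base (fun n hn hn4 ↦ ?_) hn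
  have hcases : n = 2 ∨ n = 5 ∨ n = 46 ∨
      ∃ z ∈ [0, 1, 2, 3], IsAdmissible (n - 8 * z ^ 2) := by
    simp only [IsAdmissible, List.mem_cons, List.not_mem_nil,
      or_false, exists_eq_or_imp, exists_eq_left]
    omega
  rcases hcases with rfl | rfl | rfl | ⟨z, -, hz⟩
  · exact ⟨1, 0, 1, 0, by decide⟩
  · exact ⟨2, 0, 1, 0, by decide⟩
  · exact ⟨4, 3, 2, 1, by decide⟩
  · exact hz.isRepresentedWith z

lemma isRepresentedWith_nine_mul_sq_of_isSumThreeSq {n y : ℤ} (hn : n % 3 = 2)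
    (h : IsSumThreeSq (n - 18 * y ^ 2)) : IsRepresentedWith (fun z ↦ 9 * z ^ 2) n := by
  obtain ⟨p, q, r, h⟩ := h
  have hp := sq_emod_three p
  have hq := sq_emod_three q
  have hr := sq_emod_three r
  rcases (by omega : 3 ∣ p ∧ ¬3 ∣ r ∨ 3 ∣ q ∧ ¬3 ∣ r ∨ 3 ∣ r ∧ ¬3 ∣ q) with
    ⟨⟨z, rfl⟩, hw⟩ | ⟨⟨z, rfl⟩, hw⟩ | ⟨⟨z, rfl⟩, hw⟩
  · exact ⟨q, 3 * y, r, z, hw, by linarith⟩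
  · exact ⟨p, 3 * y, r, z, hw, by linarith⟩
  · exact ⟨p, 3 * y, q, z, hw, by linarith⟩

lemma isRepresentedWith_nine_mul_sq {n : ℤ} (hn : 0 < n) :
    IsRepresentedWith (fun z ↦ 9 * z ^ 2) n := by
  by_cases hn3 : n % 3 = 2
  · have hcases : ∃ y ∈ [0, 1], IsThreeSqAdmissible (n - 18 * y ^ 2) := by
      simp only [IsThreeSqAdmissible, List.mem_cons, List.not_mem_nil, or_false,
        exists_eq_or_imp, exists_eq_left]
      omega
    obtain ⟨y, -, h⟩ := hcases
    exact isRepresentedWith_nine_mul_sq_of_isSumThreeSq hn3 h.isSumThreeSq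
  · have hcases : ∃ z ∈ [0, 1], IsAdmissible (n - 9 * z ^ 2) := by
      simp only [IsAdmissible, List.mem_cons, List.not_mem_nil,
        or_false, exists_eq_or_imp, exists_eq_left]
      omega
    obtain ⟨z, -, hz⟩ := hcases
    exact hz.isRepresentedWith z

lemma isRepresentedWith_ten_mul_sq {n : ℤ} (hn : 0 < n) :
    IsRepresentedWith (fun z ↦ 10 * z ^ 2) n := by
  refine isRepresentedWith_mul_sq_of_base (fun n hn hn4 ↦ ?_) hn
  have hcases : n = 2 ∨ n = 5 ∨ n = 30 ∨ n = 78 ∨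
      ∃ z ∈ [0, 1, 2, 3], IsAdmissible (n - 10 * z ^ 2) := by
    simp only [IsAdmissible, List.mem_cons, List.not_mem_nil,
      or_false, exists_eq_or_imp, exists_eq_left]
    omega
  rcases hcases with rfl | rfl | rfl | rfl | ⟨z, -, hz⟩
  · exact ⟨1, 0, 1, 0, by decide⟩
  · exact ⟨2, 0, 1, 0, by decide⟩
  · exact ⟨4, 0, 2, 1, by decide⟩
  · exact ⟨8, 0, 2, 1, by decide⟩
  · exact hz.isRepresentedWith z

/-! ### Octagonal last term -/

lemma isRepresentedWith_four_mul_octagonal {n : ℤ} (hn : 0 < n) :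
    IsRepresentedWith (fun z ↦ 4 * octagonal z) n := by
  refine isRepresentedWith_mul_octagonal_of_base (by norm_num) (fun n hn hn4 ↦ ?_) hn
  have hcases : n = 2 ∨
      ∃ z ∈ [0, 1, -1, 2], IsAdmissible (n - 4 * octagonal z) := by
    simp only [IsAdmissible, octagonal, List.mem_cons, List.not_mem_nil,
      or_false, exists_eq_or_imp, exists_eq_left]
    omega
  rcases hcases with rfl | ⟨z, -, hz⟩
  · exact ⟨1, 0, 1, 0, by decide⟩
  · exact hz.isRepresentedWith z

lemma isRepresentedWith_five_mul_octagonal {n : ℤ} (hn : 0 < n) :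
    IsRepresentedWith (fun z ↦ 5 * octagonal z) n := by
  refine isRepresentedWith_mul_octagonal_of_base (by norm_num) (fun n hn hn4 ↦ ?_) hn
  have hcases : n = 2 ∨ n = 5 ∨
      ∃ z ∈ [0, 1, -1], IsAdmissible (n - 5 * octagonal z) := by
    simp only [IsAdmissible, octagonal, List.mem_cons, List.not_mem_nil,
      or_false, exists_eq_or_imp, exists_eq_left]
    omega
  rcases hcases with rfl | rfl | ⟨z, -, hz⟩
  · exact ⟨1, 0, 1, 0, by decide⟩
  · exact ⟨2, 0, 1, 0, by decide⟩
  · exact hz.isRepresentedWith z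

lemma isRepresentedWith_six_mul_octagonal_of_isSumThreeSq {n y : ℤ} (hn : n % 3 = 2)
    (hsq : ∀ k : ℤ, k ^ 2 ≠ n + 2 - 18 * y ^ 2)
    (h : IsSumThreeSq (2 * (n + 2 - 18 * y ^ 2))) :
    IsRepresentedWith (fun z ↦ 6 * octagonal z) n := by
  obtain ⟨x, s, w, h⟩ := exists_sq_add_two_mul_sq_add_sq_of_isSumThreeSq h
  obtain ⟨x, s, w, hw, hs, h⟩ := exists_not_three_dvd_of_forall_sq_ne (by omega) hsq h
  obtain ⟨t, ht⟩ := exists_three_mul_octagonal_add_one_eq_sq hs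
  exact ⟨x, 3 * y, w, t, hw, by linarith⟩

lemma isRepresentedWith_six_mul_octagonal {n : ℤ} (hn : 0 < n) :
    IsRepresentedWith (fun z ↦ 6 * octagonal z) n := by
  refine isRepresentedWith_mul_octagonal_of_base (by norm_num) (fun n hn hn4 ↦ ?_) hn
  by_cases hn3 : n % 3 = 2
  · have hcases : n = 2 ∨ n = 11 ∨ ∃ y ∈ [0, 1], IsThreeSqAdmissible (2 * (n + 2 - 18 * y ^ 2)) ∧
        (n + 2 - 18 * y ^ 2) % 16 ∉ ({0, 1, 4, 9} : Finset ℤ) := by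
      simp only [IsThreeSqAdmissible, List.mem_cons, List.not_mem_nil, or_false,
        exists_eq_or_imp, exists_eq_left, Finset.mem_insert, Finset.mem_singleton]
      omega
    rcases hcases with rfl | rfl | ⟨y, -, h, hmod⟩
    · exact ⟨1, 0, 1, 0, by decide⟩
    · exact ⟨2, 0, 1, 1, by decide⟩
    · refine isRepresentedWith_six_mul_octagonal_of_isSumThreeSq hn3 (fun k hk ↦ ?_)
        h.isSumThreeSq
      exact hmod (hk ▸ sq_emod_sixteen k)
  · have hcases : ∃ z ∈ [0, 1], IsAdmissible (n - 6 * octagonal z) := by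
      simp only [IsAdmissible, octagonal, List.mem_cons, List.not_mem_nil,
        or_false, exists_eq_or_imp, exists_eq_left]
      omega
    obtain ⟨z, -, hz⟩ := hcases
    exact hz.isRepresentedWith z

lemma isRepresentedWith_seven_mul_octagonal {n : ℤ} (hn : 0 < n) :
    IsRepresentedWith (fun z ↦ 7 * octagonal z) n := by
  refine isRepresentedWith_mul_octagonal_of_base (by norm_num) (fun n hn hn4 ↦ ?_) hn
  have hcases : n = 2 ∨ n = 5 ∨ n = 30 ∨
      ∃ z ∈ [0, 1, -1], IsAdmissible (n - 7 * octagonal z) := by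
    simp only [IsAdmissible, octagonal, List.mem_cons, List.not_mem_nil,
      or_false, exists_eq_or_imp, exists_eq_left]
    omega
  rcases hcases with rfl | rfl | rfl | ⟨z, -, hz⟩
  · exact ⟨1, 0, 1, 0, by decide⟩
  · exact ⟨2, 0, 1, 0, by decide⟩
  · exact ⟨2, 3, 1, 1, by decide⟩
  · exact hz.isRepresentedWith z

lemma isRepresentedWith_eight_mul_octagonal {n : ℤ} (hn : 0 < n) :
    IsRepresentedWith (fun z ↦ 8 * octagonal z) n := by
  refine isRepresentedWith_mul_octagonal_of_base (by norm_num) (fun n hn hn4 ↦ ?_) hn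
  have hcases : n = 2 ∨ n = 5 ∨ n = 8 ∨ n = 38 ∨
      ∃ z ∈ [0, 1, -1, 2], IsAdmissible (n - 8 * octagonal z) := by
    simp only [IsAdmissible, octagonal, List.mem_cons, List.not_mem_nil,
      or_false, exists_eq_or_imp, exists_eq_left]
    omega
  rcases hcases with rfl | rfl | rfl | rfl | ⟨z, -, hz⟩
  · exact ⟨1, 0, 1, 0, by decide⟩
  · exact ⟨2, 0, 1, 0, by decide⟩
  · exact ⟨2, 0, 2, 0, by decide⟩
  · exact ⟨4, 3, 2, 0, by decide⟩
  · exact hz.isRepresentedWith z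

lemma isRepresentedWith_nine_mul_octagonal_of_isSumThreeSq {n x k : ℤ} (hn : n % 3 = 2)
    (hx : ¬3 ∣ x) (hk : x ^ 2 + 2 * k = n + 3) (h : IsSumThreeSq (3 * k)) :
    IsRepresentedWith (fun z ↦ 9 * octagonal z) n := by
  have hx3 := sq_emod_three x
  obtain ⟨w, y, s, hs, h⟩ := exists_sq_add_two_mul_sq_add_three_mul_sq (by omega) h
  obtain ⟨t, ht⟩ := exists_three_mul_octagonal_add_one_eq_sq hs
  exact ⟨w, y, x, t, hx, by linarith⟩

lemma isRepresentedWith_nine_mul_octagonal_of_emod_three {n : ℤ} (hn : 0 < n) (hn3 : n % 3 = 2)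
    (hn4 : 4 ∣ n - 9 → n ≤ 9) : IsRepresentedWith (fun z ↦ 9 * octagonal z) n := by
  have of_admissible {x k : ℤ} (hx : ¬3 ∣ x) (hk : x ^ 2 + 2 * k = n + 3)
      (h : IsThreeSqAdmissible (3 * k)) : IsRepresentedWith (fun z ↦ 9 * octagonal z) n :=
    isRepresentedWith_nine_mul_octagonal_of_isSumThreeSq hn3 hx hk h.isSumThreeSq
  obtain ⟨k, rfl | rfl⟩ := n.even_or_odd'
  · have hcases : k = 4 ∨ IsThreeSqAdmissible (3 * (k + 1)) ∨ IsThreeSqAdmissible (3 * (k - 11)) ∨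
        IsThreeSqAdmissible (3 * (k - 23)) := by
      simp only [IsThreeSqAdmissible]
      omega
    rcases hcases with rfl | h | h | h
    · exact ⟨2, 0, 2, 0, by decide⟩
    · exact of_admissible (x := 1) (by decide) (by ring) h
    · exact of_admissible (x := 5) (by decide) (by ring) h
    · exact of_admissible (x := 7) (by decide) (by ring) h
  · have hcases : k = 2 ∨ k = 5 ∨ IsThreeSqAdmissible (3 * k) ∨
        IsThreeSqAdmissible (3 * (k - 6)) := by
      simp only [IsThreeSqAdmissible]
      omega
    rcases hcases with rfl | rfl | h | h
    · exact ⟨2, 0, 1, 0, by decide⟩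
    · exact ⟨1, 0, 1, 1, by decide⟩
    · exact of_admissible (x := 2) (by decide) (by ring) h
    · exact of_admissible (x := 4) (by decide) (by ring) h

lemma isRepresentedWith_nine_mul_octagonal {n : ℤ} (hn : 0 < n) :
    IsRepresentedWith (fun z ↦ 9 * octagonal z) n := by
  refine isRepresentedWith_mul_octagonal_of_base (by norm_num) (fun n hn hn4 ↦ ?_) hn
  by_cases hn3 : n % 3 = 2
  · exact isRepresentedWith_nine_mul_octagonal_of_emod_three hn hn3 hn4
  · have hcases : ∃ z ∈ [0, 1], IsAdmissible (n - 9 * octagonal z) := by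
      simp only [IsAdmissible, octagonal, List.mem_cons, List.not_mem_nil,
        or_false, exists_eq_or_imp, exists_eq_left]
      omega
    obtain ⟨z, -, hz⟩ := hcases
    exact hz.isRepresentedWith z

lemma isRepresentedWith_ten_mul_octagonal {n : ℤ} (hn : 0 < n) :
    IsRepresentedWith (fun z ↦ 10 * octagonal z) n := by
  refine isRepresentedWith_mul_octagonal_of_base (by norm_num) (fun n hn hn4 ↦ ?_) hn
  have hcases : n = 2 ∨ n = 5 ∨ n = 8 ∨
      ∃ z ∈ [0, 1, -1, 2, -2], IsAdmissible (n - 10 * octagonal z) := by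
    simp only [IsAdmissible, octagonal, List.mem_cons, List.not_mem_nil,
      or_false, exists_eq_or_imp, exists_eq_left]
    omega
  rcases hcases with rfl | rfl | rfl | ⟨z, -, hz⟩
  · exact ⟨1, 0, 1, 0, by decide⟩
  · exact ⟨2, 0, 1, 0, by decide⟩
  · exact ⟨2, 0, 2, 0, by decide⟩
  · exact hz.isRepresentedWith z

theorem universal_case_4_11 :
    (∀ α : ℤ, 6 ≤ α → α ≤ 10 → ∀ N : ℤ, 0 ≤ N →
      ∃ x y z t : ℤ,
        x ^ 2 + 2 * y ^ 2 + α * z ^ 2 + 3 * (3 * t ^ 2 - 2 * t) = N) ∧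
    (∀ β : ℤ, 4 ≤ β → β ≤ 10 → ∀ N : ℤ, 0 ≤ N →
      ∃ x y z t : ℤ,
        x ^ 2 + 2 * y ^ 2 + 3 * (3 * z ^ 2 - 2 * z) + β * (3 * t ^ 2 - 2 * t) = N) := by
  refine ⟨fun α hα hα' N hN ↦ ?_, fun β hβ hβ' N hN ↦ ?_⟩
  · have h : IsRepresentedWith (fun z ↦ α * z ^ 2) (N + 1) := by
      have hN' : 0 < N + 1 := by omega
      interval_cases α
      exacts [isRepresentedWith_six_mul_sq hN', isRepresentedWith_seven_mul_sq hN',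
        isRepresentedWith_eight_mul_sq hN', isRepresentedWith_nine_mul_sq hN',
        isRepresentedWith_ten_mul_sq hN']
    exact h.exists_octagonal
  · have h : IsRepresentedWith (fun t ↦ β * octagonal t) (N + 1) := by
      have hN' : 0 < N + 1 := by omega
      interval_cases β
      exacts [isRepresentedWith_four_mul_octagonal hN', isRepresentedWith_five_mul_octagonal hN',
        isRepresentedWith_six_mul_octagonal hN', isRepresentedWith_seven_mul_octagonal hN',
        isRepresentedWith_eight_mul_octagonal hN', isRepresentedWith_nine_mul_octagonal hN',
        isRepresentedWith_ten_mul_octagonal hN']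
    obtain ⟨x, y, t, z, h⟩ := h.exists_octagonal
    exact ⟨x, y, z, t, by rw [← h]; simp only [octagonal]; ring⟩
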